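/- Let 1/2<γ<1 and 0<ε<1, and let Φ:ℝ×S²→ℂ be smooth with ‖Φ‖_{1,∞,γ} ≤ ε. Set 𝒥_α(ρ,σ) := L_α(σ)·Im( Φ(ρ,σ)·conj(∂_qΦ(ρ,σ)) ) for α=0,…,3 (so 𝒥₀ = −Im(Φ·conj(∂_qΦ))), and define Ã_α(t,x) := (1/4π)∫_{q}^{∞}∫_{S²} ( 𝒥_α(ρ,σ) / (t + ρ − ⟨x,σ⟩) )·χ(⟨ρ⟩/(t+r)) dS(σ) dρ and Ã_L := L^α(ω)Ã_α. Suppose there exist 𝐪∈ℝ and C₀>0 such that for all t≥0, r>0, ω∈S² with q=r−t ≤ 0: | r·Ã_L(t,rω) − 𝐪/(4π) | ≤ C₀( ε⟨q₋⟩^{−γ} + ε⟨q⟩^{1−ε}⟨r⟩^{ε−1} ). Then 𝐪 = ∫_{−∞}^{∞}∫_{S²} 𝒥₀(ρ,σ) dS(σ) dρ = −∫_{−∞}^{∞}∫_{S²} Im( Φ·conj(∂_qΦ) ) dS dρ. -/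

import Mathlib

noncomputable section

open Real MeasureTheory Filter
open scoped RealInnerProductSpace Topology

/-- Spatial points: `ℝ³` with the Euclidean norm. -/
abbrev Pt : Type := EuclideanSpace ℝ (Fin 3)

/-- `r = |x|`. -/
def rad (x : Pt) : ℝ := ‖x‖

/-- Japanese bracket `⟨a⟩ = (1+a²)^{1/2}`. -/
def jb (a : ℝ) : ℝ := Real.sqrt (1 + a ^ 2)

/-- `∂_t`. -/
def dT (f : ℝ → Pt → ℂ) : ℝ → Pt → ℂ := fun t x => deriv (fun s => f s x) t

/-- `∂_i`. -/
def dX (i : Fin 3) (f : ℝ → Pt → ℂ) : ℝ → Pt → ℂ :=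
  fun t x => fderiv ℝ (fun y => f t y) x (EuclideanSpace.single i 1)

/-- `∂_r = Σ (x_i/r) ∂_i`. -/
def dR (f : ℝ → Pt → ℂ) : ℝ → Pt → ℂ :=
  fun t x => ((rad x : ℝ) : ℂ)⁻¹ * ∑ i, ((x i : ℝ) : ℂ) * dX i f t x

/-- `L = ∂_t + ∂_r`. -/
def dL (f : ℝ → Pt → ℂ) : ℝ → Pt → ℂ := fun t x => dT f t x + dR f t x

/-- `L̲ = ∂_t − ∂_r`. -/
def dLbar (f : ℝ → Pt → ℂ) : ℝ → Pt → ℂ := fun t x => dT f t x - dR f t x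

/-- angular derivative `∂̸_i = ∂_i − ω_i ∂_r`. -/
def dAng (i : Fin 3) (f : ℝ → Pt → ℂ) : ℝ → Pt → ℂ :=
  fun t x => dX i f t x - ((x i / rad x : ℝ) : ℂ) * dR f t x

/-- `|∂̸ f|²`. -/
def angSq (f : ℝ → Pt → ℂ) (t : ℝ) (x : Pt) : ℝ := ∑ i, ‖dAng i f t x‖ ^ 2

/-- multiplication by `r`. -/
def rmul (f : ℝ → Pt → ℂ) : ℝ → Pt → ℂ := fun t x => ((rad x : ℝ) : ℂ) * f t x

/-- `□ = −∂_t² + Δ`. -/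
def box (f : ℝ → Pt → ℂ) : ℝ → Pt → ℂ :=
  fun t x => - dT (dT f) t x + ∑ i, dX i (dX i f) t x

/-- rotation `Ω_{ij} = x_i ∂_j − x_j ∂_i`. -/
def vrot (i j : Fin 3) (f : ℝ → Pt → ℂ) : ℝ → Pt → ℂ :=
  fun t x => ((x i : ℝ) : ℂ) * dX j f t x - ((x j : ℝ) : ℂ) * dX i f t x

/-- boost `Ω_{0i} = t ∂_i + x_i ∂_t`. -/
def vboost (i : Fin 3) (f : ℝ → Pt → ℂ) : ℝ → Pt → ℂ :=
  fun t x => (t : ℂ) * dX i f t x + ((x i : ℝ) : ℂ) * dT f t x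

/-- scaling `S = t ∂_t + r ∂_r`. -/
def vscal (f : ℝ → Pt → ℂ) : ℝ → Pt → ℂ :=
  fun t x => (t : ℂ) * dT f t x + ((rad x : ℝ) : ℂ) * dR f t x

/-- The commutator vector fields `Z`. -/
inductive VF : Type
  | time : VF
  | space : Fin 3 → VF
  | rot : Fin 3 → Fin 3 → VF
  | boost : Fin 3 → VF
  | scal : VF
  deriving DecidableEq, Fintype

/-- Action of a commutator vector field on a function. -/
def VF.app : VF → (ℝ → Pt → ℂ) → (ℝ → Pt → ℂ)
  | time => dT
  | space i => dX i
  | rot i j => vrot i j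
  | boost i => vboost i
  | scal => vscal

/-- `Z^I` for a multiindex `I` (a list of vector fields). -/
def Ziter : List VF → (ℝ → Pt → ℂ) → ℝ → Pt → ℂ
  | [], f => f
  | z :: l, f => z.app (Ziter l f)

/-- `C^∞` smoothness for a function of `(t,x)`. -/
def Smooth2 (f : ℝ → Pt → ℂ) : Prop := ContDiff ℝ (⊤ : ℕ∞) (Function.uncurry f)

/-- real-valued versions of the derivative operators -/
def dTR (f : ℝ → Pt → ℝ) : ℝ → Pt → ℝ := fun t x => deriv (fun s => f s x) t

def dXR (i : Fin 3) (f : ℝ → Pt → ℝ) : ℝ → Pt → ℝ :=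
  fun t x => fderiv ℝ (fun y => f t y) x (EuclideanSpace.single i 1)

def boxR (f : ℝ → Pt → ℝ) : ℝ → Pt → ℝ :=
  fun t x => - dTR (dTR f) t x + ∑ i, dXR i (dXR i f) t x

/-- `∂_q` acting on radiation fields `F(q,ω)`. -/
def dq (F : ℝ → Pt → ℂ) : ℝ → Pt → ℂ := fun q ω => deriv (fun s => F s ω) q

/-- `∂_{ω_i}` acting on radiation fields. -/
def dOm (i : Fin 3) (F : ℝ → Pt → ℂ) : ℝ → Pt → ℂ :=
  fun q ω => fderiv ℝ (fun y => F q y) ω (EuclideanSpace.single i 1)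

/-- angular rotation `ω_i ∂_{ω_j} − ω_j ∂_{ω_i}` on radiation fields. -/
def aRot (i j : Fin 3) (F : ℝ → Pt → ℂ) : ℝ → Pt → ℂ :=
  fun q ω => ((ω i : ℝ) : ℂ) * dOm j F q ω - ((ω j : ℝ) : ℂ) * dOm i F q ω

/-- `⟨q⟩∂_q` on radiation fields. -/
def qdq (F : ℝ → Pt → ℂ) : ℝ → Pt → ℂ := fun q ω => ((jb q : ℝ) : ℂ) * dq F q ω

/-- `q∂_q` on radiation fields. -/
def qmdq (F : ℝ → Pt → ℂ) : ℝ → Pt → ℂ := fun q ω => (q : ℂ) * dq F q ω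

/-- iterated angular derivatives `∂_ω^α` (as iterated rotations). -/
def aIter : List (Fin 3 × Fin 3) → (ℝ → Pt → ℂ) → ℝ → Pt → ℂ
  | [], F => F
  | p :: l, F => aRot p.1 p.2 (aIter l F)

/-- `‖F‖_{N,∞,γ} ≤ ε`, stated term by term: every seminorm
`sup |(⟨q⟩∂_q)^k ∂_ω^α F| ⟨q⟩^γ` with `k+|α| ≤ N` is at most `ε`. -/
def RadBound (N : ℕ) (γ ε : ℝ) (F : ℝ → Pt → ℂ) : Prop :=
  ∀ (k : ℕ) (l : List (Fin 3 × Fin 3)), k + l.length ≤ N →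
    ∀ (q : ℝ) (ω : Pt), rad ω = 1 →
      ‖(qdq^[k]) (aIter l F) q ω‖ * jb q ^ γ ≤ ε

/-- spacetime indices `α ∈ {0,1,2,3}`: `none` is the time index. -/
abbrev Ix : Type := Option (Fin 3)

/-- `L^α(ω) = (1, ω)`. -/
def Lup : Ix → Pt → ℝ
  | none => fun _ => 1
  | some i => fun ω => ω i

/-- `L_α(ω) = (−1, ω)`. -/
def Llow : Ix → Pt → ℝ
  | none => fun _ => -1
  | some i => fun ω => ω i

/-- `∂_α`. -/
def pd : Ix → (ℝ → Pt → ℂ) → ℝ → Pt → ℂ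
  | none => dT
  | some i => dX i

/-- `∂_α` (real valued). -/
def pdR : Ix → (ℝ → Pt → ℝ) → ℝ → Pt → ℝ
  | none => dTR
  | some i => dXR i

/-- the surface measure on the unit sphere `S² ⊆ ℝ³`. -/
def sphM : Measure (Metric.sphere (0 : Pt) 1) := (volume : Measure Pt).toSphere

/-- weighted `L²` norm `(∫ |g(t,x)|² w(r−t) dx)^{1/2}`. -/
def sqL2 (w : ℝ → ℝ) (g : ℝ → Pt → ℂ) (t : ℝ) : ℝ :=
  Real.sqrt (∫ x : Pt, ‖g t x‖ ^ 2 * w (rad x - t))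


/-- `𝒥_α(q,σ) = L_α(σ)·Im(Φ(q,σ)·conj(∂_qΦ(q,σ)))` -/
def Jr (Φ : ℝ → Pt → ℂ) (α : Ix) (q : ℝ) (σ : Pt) : ℝ :=
  Llow α σ * (Φ q σ * (starRingEnd ℂ) (dq Φ q σ)).im

/-- `Ã_α(t,x) = (1/4π)∫_{q}^∞ ∫_{S²} (𝒥_α(ρ,σ)/(t+ρ−⟨x,σ⟩))·χ(⟨ρ⟩/(t+r)) dS(σ) dρ` -/
def Atilde (χ : ℝ → ℝ) (Φ : ℝ → Pt → ℂ) (α : Ix) (t : ℝ) (x : Pt) : ℝ :=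
  (1 / (4 * π)) * ∫ ρ in Set.Ioi (rad x - t),
    (∫ σ : Metric.sphere (0 : Pt) 1,
        Jr Φ α ρ σ / (t + ρ - ⟪x, (σ : Pt)⟫) ∂sphM) * χ (jb ρ / (t + rad x))

/-- `Ã_L = L^α(ω) Ã_α = Ã_0 + Σ ω_i Ã_i` -/
def AtildeL (χ : ℝ → ℝ) (Φ : ℝ → Pt → ℂ) (t : ℝ) (x : Pt) : ℝ :=
  Atilde χ Φ none t x + ∑ i, ((rad x)⁻¹ * x i) * Atilde χ Φ (some i) t x

lemma absRpow_integrableOn :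
    IntegrableOn (fun y : ℝ => |y| ^ (-(1/2) : ℝ)) (Set.Icc (-1) 1) := by
  have h1 : IntervalIntegrable (fun y : ℝ => |y| ^ (-(1/2) : ℝ)) volume 0 1 := by
    have h := intervalIntegral.intervalIntegrable_rpow' (a := 0) (b := 1)
      (r := (-(1/2) : ℝ)) (by norm_num)
    rw [intervalIntegrable_iff_integrableOn_Ioc_of_le zero_le_one] at h ⊢
    refine h.congr_fun ?_ measurableSet_Ioc
    intro y hy
    simp only [abs_of_pos hy.1]
  have h2 : IntervalIntegrable (fun y : ℝ => |y| ^ (-(1/2) : ℝ)) volume (-1) 0 := by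
    have := (IntervalIntegrable.iff_comp_neg (f := fun y : ℝ => |y| ^ (-(1/2) : ℝ))
      (a := 0) (b := 1)).1 h1
    simpa using this.symm
  have h3 := h2.trans h1
  rwa [intervalIntegrable_iff_integrableOn_Icc_of_le (by norm_num)] at h3

lemma cube_integrable :
    Integrable (fun x : Pt => ∏ i : Fin 3, (Set.Icc (-1 : ℝ) 1).indicator
      (fun y : ℝ => if i = 1 then |y| ^ (-(1/2) : ℝ) else 1) (x i)) := by
  have h : Integrable (fun x : Fin 3 → ℝ => ∏ i : Fin 3, (Set.Icc (-1 : ℝ) 1).indicator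
      (fun y : ℝ => if i = 1 then |y| ^ (-(1/2) : ℝ) else 1) (x i)) := by
    refine Integrable.fintype_prod (f := fun i : Fin 3 => (Set.Icc (-1 : ℝ) 1).indicator
      (fun y : ℝ => if i = 1 then |y| ^ (-(1/2) : ℝ) else 1)) ?_
    intro i
    rw [integrable_indicator_iff measurableSet_Icc]
    by_cases hi : i = 1
    · simp only [hi, if_true]
      exact absRpow_integrableOn
    · simp only [hi, if_false]
      exact integrableOn_const (by simp)
  exact ((PiLp.volume_preserving_ofLp (Fin 3)).integrable_comp_emb
    (MeasurableEquiv.toLp 2 (Fin 3 → ℝ)).symm.measurableEmbedding).2 h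

lemma coord_meas : Measurable (fun x : Pt => x 1) := by fun_prop

lemma cone_integrable :
    Integrable (fun x : Pt => (Set.Iio (1:ℝ)).indicator 1 ‖x‖ *
      |‖x‖⁻¹ * x 1| ^ (-(1/2) : ℝ)) := by
  refine cube_integrable.mono' ?_ ?_
  · apply Measurable.aestronglyMeasurable
    apply Measurable.mul
    · exact (measurable_one.indicator measurableSet_Iio).comp measurable_norm
    · have := coord_meas
      fun_prop
  · refine Eventually.of_forall fun x => ?_
    by_cases hx : ‖x‖ < 1
    · have hc : ∀ i, |x i| ≤ 1 := fun i => (by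
        have := PiLp.norm_apply_le x i
        rw [Real.norm_eq_abs] at this
        linarith)
      have hm : ∀ i, x i ∈ Set.Icc (-1 : ℝ) 1 := fun i => abs_le.1 (hc i)
      rw [Set.indicator_of_mem (by exact hx)]
      simp only [Fin.prod_univ_three, Set.indicator_of_mem (hm _)]
      simp only [Pi.one_apply, one_mul, if_true, Fin.isValue, mul_one,
        show (0 : Fin 3) ≠ 1 by decide, show (2 : Fin 3) ≠ 1 by decide, if_false]
      rw [Real.norm_of_nonneg (by positivity), abs_mul, Real.mul_rpow (by positivity)
        (by positivity), abs_of_nonneg (by positivity)]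
      have : (‖x‖⁻¹) ^ (-(1/2) : ℝ) ≤ 1 := by
        rw [Real.rpow_neg (by positivity), Real.inv_rpow (by positivity), inv_inv]
        exact Real.rpow_le_one (by positivity) hx.le (by norm_num)
      exact mul_le_of_le_one_left (by positivity) this
    · rw [Set.indicator_of_notMem (by simpa using hx)]
      simp only [zero_mul, norm_zero]
      refine Finset.prod_nonneg fun i _ => Set.indicator_nonneg (fun y _ => ?_) _
      split_ifs <;> positivity

lemma sph_integrable :
    Integrable (fun σ : Metric.sphere (0 : Pt) 1 => |(σ : Pt) 1| ^ (-(1/2) : ℝ)) sphM := by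
  have h := cone_integrable
  have hmp := (volume : Measure Pt).measurePreserving_homeomorphUnitSphereProd
  have h2 := (hmp.integrable_comp_emb (Homeomorph.measurableEmbedding _)
    (g := fun p : Metric.sphere (0 : Pt) 1 × Set.Ioi (0:ℝ) =>
      (Set.Iio (1:ℝ)).indicator (1 : ℝ → ℝ) (p.2 : ℝ) * |(p.1 : Pt) 1| ^ (-(1/2) : ℝ))).1 (by
    rw [← restrict_compl_singleton (μ := (volume : Measure Pt)) 0, ← IntegrableOn,
      integrableOn_iff_comap_subtypeVal (by measurability)] at h
    refine h.congr (Eventually.of_forall fun x => ?_)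
    simp [Function.comp_def])
  have h3 := h2.prod_left_ae
  have hpos : (Measure.volumeIoiPow (Module.finrank ℝ Pt - 1))
      (Set.Iio (⟨1, Set.mem_Ioi.2 one_pos⟩ : Set.Ioi (0:ℝ))) ≠ 0 := by
    rw [Measure.volumeIoiPow_apply_Iio]
    simp
    norm_num
  obtain ⟨y, hy1, hy2⟩ : ∃ y : Set.Ioi (0:ℝ), y ∈ Set.Iio (⟨1, Set.mem_Ioi.2 one_pos⟩ : Set.Ioi (0:ℝ)) ∧
      Integrable (fun σ : Metric.sphere (0 : Pt) 1 =>
        (Set.Iio (1:ℝ)).indicator (1 : ℝ → ℝ) (y : ℝ) * |(σ : Pt) 1| ^ (-(1/2) : ℝ))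
        (volume : Measure Pt).toSphere := by
    by_contra hcon
    push Not at hcon
    apply hpos
    refine measure_mono_null ?_ (ae_iff.1 h3)
    intro y hy
    exact hcon y hy
  have hy1' : (y : ℝ) ∈ Set.Iio (1:ℝ) := hy1
  rw [sphM]
  simpa [Set.indicator_of_mem hy1'] using hy2

lemma sph_ae : ∀ᵐ σ : Metric.sphere (0 : Pt) 1 ∂sphM, (σ : Pt) 1 ≠ 0 := by
  rw [ae_iff]
  simp only [ne_eq, not_not]
  have hms : MeasurableSet {σ : Metric.sphere (0 : Pt) 1 | (σ : Pt) 1 = 0} :=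
    (coord_meas.comp measurable_subtype_coe) (measurableSet_singleton 0)
  rw [sphM, Measure.toSphere_apply' _ hms]
  let K : Submodule ℝ Pt := LinearMap.ker (EuclideanSpace.proj (𝕜 := ℝ) (1 : Fin 3) : Pt →L[ℝ] ℝ).toLinearMap
  have hK : (volume : Measure Pt) K = 0 := by
    apply Measure.addHaar_submodule
    intro hK
    have : (EuclideanSpace.single (1 : Fin 3) (1:ℝ) : Pt) ∈ K := by rw [hK]; trivial
    simp [K] at this
  rw [measure_mono_null _ hK, mul_zero]
  rintro x ⟨a, ha, b, ⟨s, hs, rfl⟩, rfl⟩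
  have hs' : (s : Pt) 1 = 0 := hs
  simp [K, hs']

/-- The scalar current. -/
def jcur (Φ : ℝ → Pt → ℂ) (ρ : ℝ) (σ : Pt) : ℝ := (Φ ρ σ * (starRingEnd ℂ) (dq Φ ρ σ)).im

lemma Jr_eq (Φ : ℝ → Pt → ℂ) (α : Ix) (ρ : ℝ) (σ : Pt) :
    Jr Φ α ρ σ = Llow α σ * jcur Φ ρ σ := rfl

instance sphM_finite : IsFiniteMeasure sphM := by unfold sphM; infer_instance

lemma jcur_cont {Φ : ℝ → Pt → ℂ} (hΦ : Smooth2 Φ) :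
    Continuous (fun p : ℝ × Pt => jcur Φ p.1 p.2) := by
  have h1 : Continuous (fun p : ℝ × Pt => Φ p.1 p.2) := hΦ.continuous
  have hd : ∀ p : ℝ × Pt, dq Φ p.1 p.2 = fderiv ℝ (Function.uncurry Φ) p (1, 0) := by
    intro p
    have hf : HasFDerivAt (Function.uncurry Φ) (fderiv ℝ (Function.uncurry Φ) p) (p.1, p.2) :=
      (hΦ.differentiable (by simp) p).hasFDerivAt
    have hc : HasDerivAt (fun s : ℝ => (s, p.2)) ((1 : ℝ), (0 : Pt)) p.1 :=
      (hasDerivAt_id p.1).prodMk (hasDerivAt_const p.1 p.2)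
    exact (hf.comp_hasDerivAt p.1 hc).deriv
  have h2 : Continuous (fun p : ℝ × Pt => dq Φ p.1 p.2) := by
    simp_rw [hd]
    exact (hΦ.continuous_fderiv (by simp)).clm_apply continuous_const
  unfold jcur
  exact Complex.continuous_im.comp (h1.mul (Complex.continuous_conj.comp h2))

lemma jb_ge_one (a : ℝ) : 1 ≤ jb a := by
  unfold jb
  rw [Real.one_le_sqrt]
  nlinarith [sq_nonneg a]

lemma jb_sq (a : ℝ) : jb a ^ 2 = 1 + a ^ 2 := by
  unfold jb
  rw [Real.sq_sqrt]
  positivity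

lemma abs_le_jb (a : ℝ) : |a| ≤ jb a := by
  unfold jb
  apply Real.abs_le_sqrt
  linarith

lemma jcur_bound {γ ε : ℝ} (hγ : 1 / 2 < γ) (hε : 0 < ε) (hε1 : ε < 1)
    {Φ : ℝ → Pt → ℂ} (hΦb : RadBound 1 γ ε Φ) (ρ : ℝ) (σ : Pt) (hσ : rad σ = 1) :
    |jcur Φ ρ σ| ≤ (1 + ρ ^ 2)⁻¹ := by
  have h0 := hΦb 0 [] (by simp) ρ σ hσ
  have h1 := hΦb 1 [] (by simp) ρ σ hσ
  simp only [Function.iterate_zero, id, aIter, Function.iterate_one, qdq, norm_mul,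
    Complex.norm_real, Real.norm_eq_abs] at h0 h1
  have hj := jb_ge_one ρ
  rw [abs_of_pos (by linarith : 0 < jb ρ)] at h1
  have hp : (jb ρ) ^ (1/2 : ℝ) ≤ jb ρ ^ γ := Real.rpow_le_rpow_of_exponent_le hj hγ.le
  have hs : (jb ρ) ^ (1/2 : ℝ) * (jb ρ) ^ (1/2 : ℝ) = jb ρ := by
    rw [← Real.rpow_add (by linarith)]; norm_num
  have hle : |jcur Φ ρ σ| ≤ ‖Φ ρ σ‖ * ‖dq Φ ρ σ‖ := by
    unfold jcur
    refine (Complex.abs_im_le_norm _).trans ?_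
    rw [norm_mul, RCLike.norm_conj]
  have hP0 : 0 ≤ ‖Φ ρ σ‖ := norm_nonneg _
  have hD0 : 0 ≤ ‖dq Φ ρ σ‖ := norm_nonneg _
  have hmul := mul_le_mul h0 h1 (by positivity) hε.le
  have hgg : jb ρ ≤ jb ρ ^ γ * jb ρ ^ γ := by
    calc jb ρ = (jb ρ) ^ (1/2 : ℝ) * (jb ρ) ^ (1/2 : ℝ) := hs.symm
      _ ≤ _ := mul_le_mul hp hp (by positivity) (by positivity)
  have hfin : ‖Φ ρ σ‖ * ‖dq Φ ρ σ‖ * jb ρ ^ 2 ≤ 1 := by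
    calc ‖Φ ρ σ‖ * ‖dq Φ ρ σ‖ * jb ρ ^ 2 = (‖Φ ρ σ‖ * ‖dq Φ ρ σ‖ * jb ρ) * jb ρ := by ring
      _ ≤ (‖Φ ρ σ‖ * ‖dq Φ ρ σ‖ * jb ρ) * (jb ρ ^ γ * jb ρ ^ γ) := by gcongr
      _ = ‖Φ ρ σ‖ * jb ρ ^ γ * (jb ρ * ‖dq Φ ρ σ‖ * jb ρ ^ γ) := by ring
      _ ≤ ε * ε := hmul
      _ ≤ 1 := by nlinarith
  rw [← jb_sq, ← one_div, le_div_iff₀ (by positivity)]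
  exact (mul_le_mul_of_nonneg_right hle (by positivity)).trans hfin

lemma chi_bound {χ : ℝ → ℝ} (hχ : ContDiff ℝ (⊤ : ℕ∞) χ)
    (hχ1 : ∀ s : ℝ, s ≤ 1 / 2 → χ s = 1) (hχ0 : ∀ s : ℝ, 3 / 4 ≤ s → χ s = 0) :
    ∃ M : ℝ, 0 ≤ M ∧ ∀ s, |χ s| ≤ M := by
  obtain ⟨M, hM⟩ := isCompact_Icc.exists_bound_of_continuousOn
    (s := Set.Icc (1/2 : ℝ) (3/4)) hχ.continuous.continuousOn
  refine ⟨max M 1, by positivity, fun s => ?_⟩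
  rcases le_total s (1/2) with h | h
  · rw [hχ1 s h]; simp
  rcases le_total s (3/4) with h' | h'
  · exact (hM s ⟨h, h'⟩).trans (le_max_left _ _)
  · rw [hχ0 s h']; simp

lemma sph_rad (σ : Metric.sphere (0 : Pt) 1) : rad (σ : Pt) = 1 := by
  simp [rad]

lemma sph_sum (σ : Metric.sphere (0 : Pt) 1) :
    (σ : Pt) 0 ^ 2 + (σ : Pt) 1 ^ 2 + (σ : Pt) 2 ^ 2 = 1 := by
  have h := EuclideanSpace.real_norm_sq_eq (σ : Pt)
  rw [Fin.sum_univ_three] at h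
  have := sph_rad σ
  unfold rad at this
  rw [← h, this]; norm_num

lemma sph_b (σ : Metric.sphere (0 : Pt) 1) : (σ : Pt) 1 ^ 2 / 2 ≤ 1 - (σ : Pt) 0 := by
  nlinarith [sph_sum σ, sq_nonneg (1 - (σ : Pt) 0), sq_nonneg ((σ : Pt) 2)]

lemma Llow_bound (α : Ix) (σ : Metric.sphere (0 : Pt) 1) : |Llow α (σ : Pt)| ≤ 1 := by
  cases α with
  | none => simp [Llow]
  | some i =>
    have := PiLp.norm_apply_le (σ : Pt) i
    have h := sph_rad σ
    unfold rad at h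
    rw [h, Real.norm_eq_abs] at this
    exact this

lemma Llow_cont (α : Ix) : Continuous (Llow α) := by
  cases α with
  | none => exact continuous_const
  | some i => unfold Llow; fun_prop

lemma den_eq (r t ρ : ℝ) (σ : Pt) :
    t + ρ - ⟪(EuclideanSpace.single 0 r : Pt), σ⟫ = (ρ - (r - t)) + r * (1 - σ 0) := by
  rw [EuclideanSpace.inner_single_left]
  simp
  ring

lemma inv_den_le {r a : ℝ} (hr : 0 < r) (ha : 0 < a) (σ : Metric.sphere (0 : Pt) 1)
    (hσ : (σ : Pt) 1 ≠ 0) :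
    (a + r * (1 - (σ : Pt) 0))⁻¹ ≤
      a ^ (-(3/4) : ℝ) * (r / 2) ^ (-(1/4) : ℝ) * |(σ : Pt) 1| ^ (-(1/2) : ℝ) := by
  set s := |(σ : Pt) 1| with hs
  have hs0 : 0 < s := abs_pos.2 hσ
  have hb : r / 2 * s ^ 2 ≤ r * (1 - (σ : Pt) 0) := by
    have := sph_b σ
    rw [hs, sq_abs]
    nlinarith
  have hb0 : 0 < r / 2 * s ^ 2 := by positivity
  set D := a + r * (1 - (σ : Pt) 0)
  have hD1 : a ≤ D := by simp only [D]; linarith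
  have hD2 : r / 2 * s ^ 2 ≤ D := by simp only [D]; linarith
  have hD : 0 < D := by linarith
  have e1 : D⁻¹ = D ^ (-(3/4) : ℝ) * D ^ (-(1/4) : ℝ) := by
    rw [← Real.rpow_add hD, ← Real.rpow_neg_one]; norm_num
  have e2 : (r / 2) ^ (-(1/4) : ℝ) * s ^ (-(1/2) : ℝ) = (r / 2 * s ^ 2) ^ (-(1/4) : ℝ) := by
    rw [Real.mul_rpow (by positivity) (by positivity), ← Real.rpow_natCast,
      ← Real.rpow_mul hs0.le]
    norm_num
  rw [e1, mul_assoc, e2]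
  exact mul_le_mul (Real.rpow_le_rpow_of_nonpos ha hD1 (by norm_num))
    (Real.rpow_le_rpow_of_nonpos hb0 hD2 (by norm_num)) (by positivity) (by positivity)

lemma kern_meas {Φ : ℝ → Pt → ℂ} (hΦ : Smooth2 Φ) (α : Ix) (t : ℝ) (x : Pt) :
    Measurable (fun p : ℝ × Metric.sphere (0 : Pt) 1 =>
      Jr Φ α p.1 p.2 / (t + p.1 - ⟪x, (p.2 : Pt)⟫)) := by
  have h1 : Continuous (fun p : ℝ × Metric.sphere (0 : Pt) 1 => Jr Φ α p.1 p.2) := by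
    simp_rw [Jr_eq]
    exact ((Llow_cont α).comp (continuous_subtype_val.comp continuous_snd)).mul
      ((jcur_cont hΦ).comp (continuous_fst.prodMk (continuous_subtype_val.comp continuous_snd)))
  have h2 : Continuous (fun p : ℝ × Metric.sphere (0 : Pt) 1 =>
      (t + p.1 - ⟪x, (p.2 : Pt)⟫)) := by fun_prop
  exact h1.measurable.div h2.measurable

lemma inner_bound {Φ : ℝ → Pt → ℂ}
    (hj : ∀ ρ (σ : Metric.sphere (0 : Pt) 1), |jcur Φ ρ σ| ≤ (1 + ρ ^ 2)⁻¹)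
    (α : Ix) {r t ρ : ℝ} (hr : 0 < r) (ha : r - t < ρ)
    (σ : Metric.sphere (0 : Pt) 1) (hσ : (σ : Pt) 1 ≠ 0) :
    ‖Jr Φ α ρ σ / (t + ρ - ⟪(EuclideanSpace.single 0 r : Pt), (σ : Pt)⟫)‖ ≤
      (ρ - (r - t)) ^ (-(3/4) : ℝ) * (r / 2) ^ (-(1/4) : ℝ) * |(σ : Pt) 1| ^ (-(1/2) : ℝ) := by
  have hd := inv_den_le hr (sub_pos.2 ha) σ hσ
  have hb := sph_b σ
  have hpos : 0 < (ρ - (r - t)) + r * (1 - (σ : Pt) 0) := by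
    have : 0 ≤ r * (1 - (σ : Pt) 0) := mul_nonneg hr.le (by nlinarith [sq_nonneg ((σ : Pt) 1)])
    linarith
  rw [den_eq, norm_div, Real.norm_of_nonneg hpos.le, Real.norm_eq_abs, Jr_eq, abs_mul,
    div_eq_mul_inv]
  have h1 : |jcur Φ ρ σ| ≤ 1 := (hj ρ σ).trans (inv_le_one_of_one_le₀ (by nlinarith [sq_nonneg ρ]))
  have h2 : |Llow α (σ : Pt)| * |jcur Φ ρ σ| ≤ 1 :=
    mul_le_one₀ (Llow_bound α σ) (abs_nonneg _) h1
  calc _ ≤ 1 * _ := mul_le_mul h2 hd (by positivity) (by norm_num)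
    _ = _ := one_mul _

lemma inner_integrable {Φ : ℝ → Pt → ℂ} (hΦ : Smooth2 Φ)
    (hj : ∀ ρ (σ : Metric.sphere (0 : Pt) 1), |jcur Φ ρ σ| ≤ (1 + ρ ^ 2)⁻¹)
    (α : Ix) {r t ρ : ℝ} (hr : 0 < r) (ha : r - t < ρ) :
    Integrable (fun σ : Metric.sphere (0 : Pt) 1 =>
      Jr Φ α ρ σ / (t + ρ - ⟪(EuclideanSpace.single 0 r : Pt), (σ : Pt)⟫)) sphM := by
  refine (sph_integrable.const_mul
    ((ρ - (r - t)) ^ (-(3/4) : ℝ) * (r / 2) ^ (-(1/4) : ℝ))).mono' ?_ ?_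
  · exact ((kern_meas hΦ α t _).comp (measurable_const.prodMk measurable_id)).aestronglyMeasurable
  · filter_upwards [sph_ae] with σ hσ
    exact inner_bound hj α hr ha σ hσ

lemma outer_integrable {Φ : ℝ → Pt → ℂ} (hΦ : Smooth2 Φ)
    (hj : ∀ ρ (σ : Metric.sphere (0 : Pt) 1), |jcur Φ ρ σ| ≤ (1 + ρ ^ 2)⁻¹)
    {χ : ℝ → ℝ} (hχ : Continuous χ) (hχ0 : ∀ s : ℝ, 3 / 4 ≤ s → χ s = 0)
    {M : ℝ} (hM0 : 0 ≤ M) (hM : ∀ s, |χ s| ≤ M)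
    (α : Ix) {r t : ℝ} (hr : 0 < r) (ht : 0 ≤ t) :
    IntegrableOn (fun ρ => (∫ σ : Metric.sphere (0 : Pt) 1,
      Jr Φ α ρ σ / (t + ρ - ⟪(EuclideanSpace.single 0 r : Pt), (σ : Pt)⟫) ∂sphM) *
        χ (jb ρ / (t + r))) (Set.Ioi (r - t)) := by
  set K := ∫ σ : Metric.sphere (0 : Pt) 1, |(σ : Pt) 1| ^ (-(1/2) : ℝ) ∂sphM with hK
  have hK0 : 0 ≤ K := integral_nonneg fun σ => by positivity
  have hg : IntegrableOn (fun ρ : ℝ => (ρ - (r - t)) ^ (-(3/4) : ℝ)) (Set.Ioc (r - t) (t + r)) := by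
    have h := (intervalIntegral.intervalIntegrable_rpow' (a := 0) (b := 2 * t)
      (r := (-(3/4) : ℝ)) (by norm_num)).comp_sub_right (r - t)
    rw [intervalIntegrable_iff_integrableOn_Ioc_of_le (by linarith)] at h
    rw [zero_add, show 2 * t + (r - t) = t + r by ring] at h
    exact h
  have hg2 : Integrable ((Set.Ioc (r - t) (t + r)).indicator
      (fun ρ : ℝ => (ρ - (r - t)) ^ (-(3/4) : ℝ) * ((r / 2) ^ (-(1/4) : ℝ) * K * M))) :=
    (integrable_indicator_iff measurableSet_Ioc).2 (hg.mul_const _)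
  refine hg2.integrableOn.mono' ?_ ?_
  · apply AEStronglyMeasurable.mul
    · exact ((kern_meas hΦ α t _).stronglyMeasurable.integral_prod_right).aestronglyMeasurable
    · apply Continuous.aestronglyMeasurable
      unfold jb
      fun_prop
  · filter_upwards [ae_restrict_mem measurableSet_Ioi] with ρ hρ
    have hρ' : r - t < ρ := hρ
    rw [norm_mul, Real.norm_eq_abs (χ _)]
    by_cases h : ρ ≤ t + r
    · rw [Set.indicator_of_mem (Set.mem_Ioc.2 ⟨hρ', h⟩)]
      have h1 : ‖∫ σ : Metric.sphere (0 : Pt) 1,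
          Jr Φ α ρ σ / (t + ρ - ⟪(EuclideanSpace.single 0 r : Pt), (σ : Pt)⟫) ∂sphM‖ ≤
          (ρ - (r - t)) ^ (-(3/4) : ℝ) * (r / 2) ^ (-(1/4) : ℝ) * K := by
        rw [hK, ← integral_const_mul]
        refine norm_integral_le_of_norm_le (sph_integrable.const_mul _) ?_
        filter_upwards [sph_ae] with σ hσ
        exact inner_bound hj α hr hρ' σ hσ
      calc _ ≤ _ * M := mul_le_mul h1 (hM _) (abs_nonneg _) ((norm_nonneg _).trans h1)
        _ = _ := by ring
    · push Not at h
      rw [hχ0 _ ?_, abs_zero, mul_zero]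
      · exact Set.indicator_nonneg (fun y hy => by
          have : 0 < y - (r - t) := sub_pos.2 hy.1
          positivity) _
      · rw [le_div_iff₀ (by linarith)]
        have := (le_abs_self ρ).trans (abs_le_jb ρ)
        linarith

/-- The combined kernel. -/
def kern (r a c : ℝ) : ℝ := -(r * (1 - c)) / (a + r * (1 - c))

lemma combine {Φ : ℝ → Pt → ℂ} (hΦ : Smooth2 Φ)
    (hj : ∀ ρ (σ : Metric.sphere (0 : Pt) 1), |jcur Φ ρ σ| ≤ (1 + ρ ^ 2)⁻¹)
    {χ : ℝ → ℝ} (hχ : Continuous χ) (hχ0 : ∀ s : ℝ, 3 / 4 ≤ s → χ s = 0)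
    {M : ℝ} (hM0 : 0 ≤ M) (hM : ∀ s, |χ s| ≤ M)
    {r t : ℝ} (hr : 0 < r) (ht : 0 ≤ t) :
    r * AtildeL χ Φ t (EuclideanSpace.single 0 r) = (1 / (4 * π)) *
      ∫ ρ : ℝ, (Set.Ioi (r - t)).indicator (fun ρ => (∫ σ : Metric.sphere (0 : Pt) 1,
        kern r (ρ - (r - t)) ((σ : Pt) 0) * jcur Φ ρ σ ∂sphM) * χ (jb ρ / (t + r))) ρ := by
  have hrad : rad (EuclideanSpace.single 0 r : Pt) = r := by
    simp [rad, abs_of_pos hr]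
  have hL : AtildeL χ Φ t (EuclideanSpace.single 0 r) =
      Atilde χ Φ none t (EuclideanSpace.single 0 r) +
      Atilde χ Φ (some 0) t (EuclideanSpace.single 0 r) := by
    unfold AtildeL
    rw [hrad, Fin.sum_univ_three]
    simp [hr.ne']
  rw [hL]
  unfold Atilde
  rw [hrad, ← mul_add, ← integral_add
    (outer_integrable hΦ hj hχ hχ0 hM0 hM none hr ht)
    (outer_integrable hΦ hj hχ hχ0 hM0 hM (some 0) hr ht), integral_indicator measurableSet_Ioi,
    mul_left_comm, ← integral_const_mul]
  congr 1
  refine setIntegral_congr_fun measurableSet_Ioi ?_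
  intro ρ hρ
  have hρ' : r - t < ρ := hρ
  simp only
  rw [← add_mul, ← integral_add (inner_integrable hΦ hj none hr hρ')
    (inner_integrable hΦ hj (some 0) hr hρ'), ← mul_assoc, ← integral_const_mul]
  congr 1
  congr 1
  ext σ
  rw [den_eq, Jr_eq, Jr_eq, kern]
  simp only [Llow]
  ring

lemma kern_bound {r a : ℝ} (hr : 0 < r) (ha : 0 < a) (σ : Metric.sphere (0 : Pt) 1) :
    |kern r a ((σ : Pt) 0)| ≤ 1 := by
  have : 0 ≤ r * (1 - (σ : Pt) 0) :=
    mul_nonneg hr.le (by nlinarith [sq_nonneg ((σ : Pt) 1), sph_b σ])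
  rw [kern, abs_div, abs_neg, abs_of_nonneg this, abs_of_pos (by linarith)]
  exact div_le_one_of_le₀ (by linarith) (by linarith)

lemma kern_lim (ρ c : ℝ) (hc : c < 1) :
    Tendsto (fun R : ℝ => kern (R ^ 2) (ρ + R) c) atTop (𝓝 (-1)) := by
  have h1 : Tendsto (fun R : ℝ => -(1 - c) / ((ρ * (R⁻¹ * R⁻¹) + R⁻¹) + (1 - c))) atTop
      (𝓝 (-(1 - c) / ((ρ * (0 * 0) + 0) + (1 - c)))) := by
    have h := tendsto_inv_atTop_zero (𝕜 := ℝ)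
    refine tendsto_const_nhds.div ((((h.mul h).const_mul ρ).add h).add_const _) ?_
    simp; linarith
  have e : -(1 - c) / ((ρ * (0 * 0) + 0) + (1 - c)) = -1 := by
    have : 1 - c ≠ 0 := by linarith
    simp only [mul_zero, add_zero, zero_add]
    field_simp
  rw [e] at h1
  refine h1.congr' ?_
  filter_upwards [eventually_gt_atTop 0] with R hR
  rw [kern, ← mul_div_mul_left _ _ (pow_ne_zero 2 hR.ne')]
  congr 1
  · ring
  · field_simp

lemma main_lim {Φ : ℝ → Pt → ℂ} (hΦ : Smooth2 Φ)
    (hj : ∀ ρ (σ : Metric.sphere (0 : Pt) 1), |jcur Φ ρ σ| ≤ (1 + ρ ^ 2)⁻¹)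
    {χ : ℝ → ℝ} (hχ : Continuous χ) (hχ1 : ∀ s : ℝ, s ≤ 1 / 2 → χ s = 1)
    {M : ℝ} (hM0 : 0 ≤ M) (hM : ∀ s, |χ s| ≤ M) :
    Tendsto (fun R : ℝ => ∫ ρ : ℝ, (Set.Ioi (-R)).indicator
      (fun ρ => (∫ σ : Metric.sphere (0 : Pt) 1,
        kern (R ^ 2) (ρ + R) ((σ : Pt) 0) * jcur Φ ρ σ ∂sphM) * χ (jb ρ / (2 * R ^ 2 + R))) ρ)
      atTop (𝓝 (∫ ρ : ℝ, ∫ σ : Metric.sphere (0 : Pt) 1, Jr Φ none ρ σ ∂sphM)) := by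
  have hjm : Measurable (fun p : ℝ × Metric.sphere (0 : Pt) 1 => jcur Φ p.1 p.2) :=
    ((jcur_cont hΦ).comp
      (continuous_fst.prodMk (continuous_subtype_val.comp continuous_snd))).measurable
  have hkm : ∀ R : ℝ, Measurable (fun p : ℝ × Metric.sphere (0 : Pt) 1 =>
      kern (R ^ 2) (p.1 + R) ((p.2 : Pt) 0) * jcur Φ p.1 p.2) := by
    intro R
    refine Measurable.mul ?_ hjm
    unfold kern
    have hc : Measurable (fun p : ℝ × Metric.sphere (0 : Pt) 1 => (p.2 : Pt) 0) := by fun_prop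
    fun_prop
  refine tendsto_integral_filter_of_dominated_convergence
    (fun ρ => (1 + ρ ^ 2)⁻¹ * (sphM.real Set.univ * M)) ?_ ?_
    (integrable_inv_one_add_sq.mul_const _) ?_
  · refine Eventually.of_forall fun R => ?_
    refine AEStronglyMeasurable.indicator ?_ measurableSet_Ioi
    apply AEStronglyMeasurable.mul
    · exact ((hkm R).stronglyMeasurable.integral_prod_right).aestronglyMeasurable
    · apply Continuous.aestronglyMeasurable
      unfold jb
      fun_prop
  · filter_upwards [eventually_gt_atTop 0] with R hR
    refine Eventually.of_forall fun ρ => ?_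
    by_cases h : ρ ∈ Set.Ioi (-R)
    · have h' : -R < ρ := h
      rw [Set.indicator_of_mem h, norm_mul, Real.norm_eq_abs (χ _)]
      have h1 : ‖∫ σ : Metric.sphere (0 : Pt) 1,
          kern (R ^ 2) (ρ + R) ((σ : Pt) 0) * jcur Φ ρ σ ∂sphM‖ ≤
          (1 + ρ ^ 2)⁻¹ * sphM.real Set.univ := by
        refine norm_integral_le_of_norm_le_const (Eventually.of_forall fun σ => ?_)
        rw [norm_mul, Real.norm_eq_abs, Real.norm_eq_abs]
        calc _ ≤ 1 * (1 + ρ ^ 2)⁻¹ := mul_le_mul (kern_bound (by positivity) (by linarith) σ)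
              (hj ρ σ) (abs_nonneg _) (by norm_num)
          _ = _ := one_mul _
      calc _ ≤ _ * M := mul_le_mul h1 (hM _) (abs_nonneg _) ((norm_nonneg _).trans h1)
        _ = _ := by ring
    · rw [Set.indicator_of_notMem h, norm_zero]
      positivity
  · refine Eventually.of_forall fun ρ => ?_
    have hin : Tendsto (fun R : ℝ => ∫ σ : Metric.sphere (0 : Pt) 1,
        kern (R ^ 2) (ρ + R) ((σ : Pt) 0) * jcur Φ ρ σ ∂sphM) atTop
        (𝓝 (∫ σ : Metric.sphere (0 : Pt) 1, Jr Φ none ρ σ ∂sphM)) := by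
      refine tendsto_integral_filter_of_dominated_convergence
        (fun σ => (1 + ρ ^ 2)⁻¹) ?_ ?_ (integrable_const _) ?_
      · exact Eventually.of_forall fun R =>
          ((hkm R).comp (measurable_const.prodMk measurable_id)).aestronglyMeasurable
      · filter_upwards [eventually_gt_atTop 0, eventually_gt_atTop (-ρ)] with R hR hR'
        refine Eventually.of_forall fun σ => ?_
        rw [norm_mul, Real.norm_eq_abs, Real.norm_eq_abs]
        calc _ ≤ 1 * (1 + ρ ^ 2)⁻¹ := mul_le_mul (kern_bound (by positivity) (by linarith) σ)
              (hj ρ σ) (abs_nonneg _) (by norm_num)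
          _ = _ := one_mul _
      · filter_upwards [sph_ae] with σ hσ
        have hc : (σ : Pt) 0 < 1 := by
          have := sph_b σ
          have : 0 < (σ : Pt) 1 ^ 2 := by positivity
          linarith
        exact (kern_lim ρ _ hc).mul_const _
    refine hin.congr' ?_
    filter_upwards [eventually_gt_atTop 0, eventually_gt_atTop (-ρ),
      eventually_ge_atTop (2 * jb ρ)] with R hR hR' hR2
    rw [Set.indicator_of_mem (by simp only [Set.mem_Ioi]; linarith), hχ1, mul_one]
    rw [div_le_iff₀ (by positivity)]
    nlinarith [sq_nonneg R]

lemma rhs_lim {γ ε C₀ : ℝ} (hγ : 1 / 2 < γ) (hε : 0 < ε) (hε1 : ε < 1) :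
    Tendsto (fun R : ℝ => C₀ * (ε * jb R ^ (-γ)
      + ε * jb R ^ (1 - ε) * jb (R ^ 2) ^ (ε - 1))) atTop (𝓝 0) := by
  have hjb : Tendsto jb atTop atTop :=
    tendsto_atTop_mono (fun R => (le_abs_self R).trans (abs_le_jb R)) tendsto_id
  have h1 : Tendsto (fun R => jb R ^ (-γ)) atTop (𝓝 0) :=
    (tendsto_rpow_neg_atTop (by linarith)).comp hjb
  have h2 : Tendsto (fun R : ℝ => jb R ^ (1 - ε) * jb (R ^ 2) ^ (ε - 1)) atTop (𝓝 0) := by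
    have h3 : Tendsto (fun R : ℝ => ((2 : ℝ)) ^ (1 - ε) * R ^ (-(1 - ε))) atTop (𝓝 0) := by
      simpa using (tendsto_rpow_neg_atTop (by linarith : 0 < 1 - ε)).const_mul ((2 : ℝ) ^ (1 - ε))
    refine squeeze_zero' (Eventually.of_forall fun R => ?_) ?_ h3
    · have := jb_ge_one R
      have := jb_ge_one (R ^ 2)
      positivity
    · filter_upwards [eventually_ge_atTop 1] with R hR
      have hR0 : 0 < R := by linarith
      have a1 : jb R ≤ 2 * R := by
        unfold jb
        apply Real.sqrt_le_iff.2
        constructor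
        · linarith
        · nlinarith
      have a2 : R ^ 2 ≤ jb (R ^ 2) := (le_abs_self _).trans (abs_le_jb _)
      have a3 := jb_ge_one R
      calc jb R ^ (1 - ε) * jb (R ^ 2) ^ (ε - 1)
          ≤ (2 * R) ^ (1 - ε) * (R ^ 2) ^ (ε - 1) := by
            apply mul_le_mul
            · exact Real.rpow_le_rpow (by linarith) a1 (by linarith)
            · exact Real.rpow_le_rpow_of_nonpos (by positivity) a2 (by linarith)
            · have := jb_ge_one (R ^ 2)
              positivity
            · positivity
        _ = 2 ^ (1 - ε) * R ^ (-(1 - ε)) := by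
            rw [Real.mul_rpow (by norm_num) hR0.le, ← Real.rpow_natCast R 2,
              ← Real.rpow_mul hR0.le, mul_assoc, ← Real.rpow_add hR0]
            congr 2
            push_cast
            ring
  have := ((h1.const_mul ε).add (h2.const_mul ε)).const_mul C₀
  simpa [mul_assoc] using this


/-- Proposition 3.1, the charge in terms of the radiation field:
if `rÃ_L` is asymptotic to `𝐪/4π` in the stated sense, then
`𝐪 = ∫∫ 𝒥₀ dS dρ = −∫∫ Im(Φ conj ∂_qΦ) dS dρ`. -/
theorem stmt9 (γ ε : ℝ) (hγ : 1 / 2 < γ) (hγ1 : γ < 1) (hε : 0 < ε) (hε1 : ε < 1)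
    (χ : ℝ → ℝ) (hχ : ContDiff ℝ (⊤ : ℕ∞) χ)
    (hχ1 : ∀ s : ℝ, s ≤ 1 / 2 → χ s = 1) (hχ0 : ∀ s : ℝ, 3 / 4 ≤ s → χ s = 0)
    (Φ : ℝ → Pt → ℂ) (hΦ : Smooth2 Φ) (hΦb : RadBound 1 γ ε Φ)
    (Q C₀ : ℝ) (hC₀ : 0 < C₀)
    (hasym : ∀ (t : ℝ) (x : Pt), 0 ≤ t → x ≠ 0 → rad x - t ≤ 0 →
      |rad x * AtildeL χ Φ t x - Q / (4 * π)|
        ≤ C₀ * (ε * jb (max (t - rad x) 0) ^ (-γ)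
            + ε * jb (rad x - t) ^ (1 - ε) * jb (rad x) ^ (ε - 1))) :
    Q = ∫ ρ : ℝ, ∫ σ : Metric.sphere (0 : Pt) 1, Jr Φ none ρ σ ∂sphM := by
  have hj : ∀ ρ (σ : Metric.sphere (0 : Pt) 1), |jcur Φ ρ σ| ≤ (1 + ρ ^ 2)⁻¹ :=
    fun ρ σ => jcur_bound hγ hε hε1 hΦb ρ σ (sph_rad σ)
  obtain ⟨M, hM0, hM⟩ := chi_bound hχ hχ1 hχ0
  have hlim := (main_lim hΦ hj hχ.continuous hχ1 hM0 hM).const_mul (1 / (4 * π))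
  have hlim2 : Tendsto (fun R : ℝ => R ^ 2 * AtildeL χ Φ (R ^ 2 + R)
      (EuclideanSpace.single 0 (R ^ 2))) atTop (𝓝 (Q / (4 * π))) := by
    rw [tendsto_iff_dist_tendsto_zero]
    refine squeeze_zero' (Eventually.of_forall fun R => dist_nonneg) ?_
      (rhs_lim (C₀ := C₀) hγ hε hε1)
    filter_upwards [eventually_gt_atTop 0] with R hR
    have hrad : rad (EuclideanSpace.single 0 (R ^ 2) : Pt) = R ^ 2 := by
      simp [rad]
    have h := hasym (R ^ 2 + R) (EuclideanSpace.single 0 (R ^ 2)) (by positivity)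
      (by simp [hR.ne']) (by rw [hrad]; linarith)
    rw [hrad] at h
    have e1 : R ^ 2 + R - R ^ 2 = R := by ring
    have e2 : R ^ 2 - (R ^ 2 + R) = -R := by ring
    have e3 : jb (-R) = jb R := by simp [jb]
    rw [e1, e2, e3, max_eq_left hR.le] at h
    rw [Real.dist_eq]
    exact h
  have heq := tendsto_nhds_unique hlim2 (hlim.congr' (by
    filter_upwards [eventually_gt_atTop 0] with R hR
    rw [combine hΦ hj hχ.continuous hχ0 hM0 hM (r := R ^ 2) (t := R ^ 2 + R) (by positivity)
      (by positivity)]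
    have e2 : R ^ 2 - (R ^ 2 + R) = -R := by ring
    have e4 : R ^ 2 + R + R ^ 2 = 2 * R ^ 2 + R := by ring
    simp only [e2, e4, sub_neg_eq_add]))
  have hpi : (4 * π) ≠ 0 := by positivity
  field_simp at heq
  exact heq
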